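/- Let R be a commutative ring, λ, δ ∈ R^× with λ = δ^n. A subset C of R^n is a cyclic code (a submodule closed under the cyclic shift) if and only if μ(C) is a λ-constacyclic code (a submodule closed under the λ-constacyclic shift), where μ is the map (c₀,…,c_{n-1}) ↦ (c₀, δ⁻¹c₁, δ⁻²c₂, …, δ^{-(n-1)}c_{n-1}). -/

import Mathlib

theorem shift_coeff {R : Type*} [CommRing R] (n : ℕ) (hn : 0 < n) (δ : Rˣ) (i : ZMod n) :
    (if i = 0 then (δ : R) ^ n else 1) * ((δ⁻¹ : Rˣ) : R) ^ (i - 1).val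
      = ((δ⁻¹ : Rˣ) : R) ^ i.val * (δ : R) := by
  obtain ⟨m, rfl⟩ : ∃ m, n = m + 1 := ⟨n - 1, by omega⟩
  have hd : (δ : R) * ((δ⁻¹ : Rˣ) : R) = 1 := δ.mul_inv
  by_cases h : i = 0
  · subst h
    rw [if_pos rfl, zero_sub, ZMod.val_neg_one, ZMod.val_zero, pow_succ, mul_right_comm,
      ← mul_pow, hd, one_pow, pow_zero]
  · rw [if_neg h, one_mul]
    have hi : i.val ≠ 0 := fun h0 => h ((ZMod.val_eq_zero i).1 h0)
    have hlt : i.val < m + 1 := ZMod.val_lt i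
    obtain ⟨k, hk⟩ : ∃ k, i.val = k + 1 := ⟨i.val - 1, by omega⟩
    have e : i - 1 = ((k : ℕ) : ZMod (m + 1)) := by
      have : ((i.val : ℕ) : ZMod (m + 1)) = i := ZMod.natCast_zmod_val i
      rw [← this, hk]
      push_cast
      ring
    rw [e, ZMod.val_natCast, Nat.mod_eq_of_lt (by omega), hk, pow_succ, mul_assoc,
      mul_comm _ (δ : R), hd, mul_one]

theorem stmt_10 (R : Type*) [CommRing R] (n : ℕ) (hn : 0 < n)
    (δ : Rˣ) (lam : R) (hlam : lam = (δ : R) ^ n)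
    (C : Submodule R (ZMod n → R)) :
    -- μ sends c to (i ↦ δ^{-i} c_i); μ(C) is the image of C under μ
    (∀ c ∈ C, (fun i : ZMod n => c (i - 1)) ∈ C) ↔
      (∀ d ∈ (fun c : ZMod n → R => fun i : ZMod n => ((δ⁻¹ : Rˣ) : R) ^ i.val * c i) '' (C : Set (ZMod n → R)),
        (fun i : ZMod n => (if i = 0 then lam else 1) * d (i - 1)) ∈
          (fun c : ZMod n → R => fun i : ZMod n => ((δ⁻¹ : Rˣ) : R) ^ i.val * c i) '' (C : Set (ZMod n → R))) := by
  have key : ∀ c : ZMod n → R,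
      (fun i : ZMod n => (if i = 0 then lam else 1) * (((δ⁻¹ : Rˣ) : R) ^ (i - 1).val * c (i - 1)))
      = fun i : ZMod n => ((δ⁻¹ : Rˣ) : R) ^ i.val *
        ((δ : R) • (fun i : ZMod n => c (i - 1))) i := by
    intro c
    funext i
    rw [← mul_assoc, hlam, shift_coeff n hn δ i, mul_assoc]
    rfl
  constructor
  · rintro h _ ⟨c, hc, rfl⟩
    exact ⟨_, C.smul_mem (δ : R) (h c hc), (key c).symm⟩
  · intro h c hc
    obtain ⟨b, hb, hbe⟩ := h _ ⟨c, hc, rfl⟩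
    have h2 := hbe.trans (key c)
    have h3 : b = (δ : R) • (fun i : ZMod n => c (i - 1)) := by
      funext i
      exact ((δ⁻¹).isUnit.pow i.val).mul_left_cancel (congrFun h2 i)
    have h4 := C.smul_mem ((δ⁻¹ : Rˣ) : R) (h3 ▸ hb : (δ : R) • (fun i : ZMod n => c (i - 1)) ∈ C)
    rwa [smul_smul, δ.inv_mul, one_smul] at h4
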